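/- arXiv:2112.01674 — 3 statements merged into one kernel-verified Lean document; each statement's English description precedes it below -/
import Mathlib

section
/- (Upper bound in Theorem 3.1 for case 4.) Let n ≥ 2 be an integer. Let M : (0,1) → ℝ be given by M(h) = Σ_{i=0}^{n} u_i (1−h)^{i+1} + Σ_{i=1}^{n} v_i h^i + Σ_{i=1}^{⌊(n+1)/2⌋} r_i h^i ln h, for arbitrary real coefficients u_i, v_i, r_i. Then M has at most n + 1 + ⌊(n+1)/2⌋ zeros on (0,1) counting multiplicity. -/
/-!
The function is `M h = P(h) + Q(h) ln h` with `P` a polynomial of degree at most `n + 1` and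
`Q = Σ r_i X^i`, `1 ≤ i ≤ m = ⌊(n+1)/2⌋`. The `(n+2)`-nd derivative kills `P`, and since `i ≤ n + 1`
it sends `h^i ln h` to `c_i h^(i-n-2)` with `c_i ≠ 0` (`iteratedDeriv_pow_mul_log`). Hence
`h^(n+1) M^(n+2)(h)` is the polynomial `R = Σ r_i c_i X^(i-1)`, of degree at most `m - 1`.

By Rolle's theorem with multiplicities (`HasZeros.deriv`), a function with `K + k` zeros has a
`k`-th derivative with at least `K` zeros. If `M` had `n + 2 + m` zeros, then `R` would have at
least `m`, so `R = 0` and all `r_i` vanish. Then `M` is a polynomial of degree at most `n + 1` with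
more than `n + 1` zeros, so it vanishes identically, which is incompatible with a zero of finite
multiplicity.
-/

/-- `f` has at most `N` zeros on `I` counting multiplicity: for any finitely many
distinct points of `I` that are zeros of `f` with multiplicities `l x`, the sum of
the multiplicities is at most `N`. -/
def ZerosLE (f : ℝ → ℝ) (I : Set ℝ) (N : ℕ) : Prop :=
  ∀ (s : Finset ℝ) (l : ℝ → ℕ),
    (↑s : Set ℝ) ⊆ I →
    (∀ x ∈ s, 1 ≤ l x ∧ (∀ j < l x, iteratedDeriv j f x = 0) ∧
      iteratedDeriv (l x) f x ≠ 0) →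
    ∑ x ∈ s, l x ≤ N

/-- `f` has at least `K` zeros on `I` counted with multiplicity: finitely many points `x` of `I`
at which `f` vanishes to order at least `l x`, with `∑ l x ≥ K`. Neither positivity of `l x` nor
exactness of the order is required, so zeros of infinite order are allowed. -/
def HasZeros (f : ℝ → ℝ) (I : Set ℝ) (K : ℕ) : Prop :=
  ∃ (s : Finset ℝ) (l : ℝ → ℕ), (↑s : Set ℝ) ⊆ I ∧
    (∀ x ∈ s, ∀ j < l x, iteratedDeriv j f x = 0) ∧ K ≤ ∑ x ∈ s, l x

/-- Rolle's theorem with multiplicities: the zeros of `deriv f` are those of `f` with multiplicity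
lowered by one, together with one new zero in each gap. The bound `y ≤ x` keeps the zeros found so
far to the left of the next gap. -/
lemma rolle_aux {f : ℝ → ℝ} {I : Set ℝ} (hI : I.OrdConnected) (hf : ContinuousOn f I)
    (l : ℝ → ℕ) (s : Finset ℝ) (hs : (↑s : Set ℝ) ⊆ I)
    (hl : ∀ x ∈ s, 1 ≤ l x) (hz : ∀ x ∈ s, ∀ j < l x, iteratedDeriv j f x = 0) :
    ∃ (t : Finset ℝ) (l' : ℝ → ℕ), (↑t : Set ℝ) ⊆ I ∧
      (∀ x ∈ t, ∀ j < l' x, iteratedDeriv j (deriv f) x = 0) ∧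
      (∀ y ∈ t, ∃ x ∈ s, y ≤ x) ∧ ∑ x ∈ s, l x ≤ ∑ x ∈ t, l' x + 1 := by
  induction s using Finset.induction_on_max with
  | empty => exact ⟨∅, l, by simp, by simp, by simp, by simp⟩
  | insert a s has ih =>
    have haI : a ∈ I := hs (by simp)
    have hla : 1 ≤ l a := hl a (by simp)
    have hza : ∀ j < l a - 1, iteratedDeriv j (deriv f) a = 0 := by
      intro j hj
      rw [← iteratedDeriv_succ']
      exact hz a (by simp) _ (by omega)
    have ha : a ∉ s := fun h => lt_irrefl _ (has a h)
    rcases s.eq_empty_or_nonempty with rfl | hne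
    · refine ⟨{a}, fun _ => l a - 1, by simpa using haI, by simpa using hza, by simp, ?_⟩
      simp; omega
    obtain ⟨t, l', htI, htz, hts, hsum⟩ := ih
      (fun x hx => hs (by simp at hx ⊢; exact Or.inr hx))
      (fun x hx => hl x (Finset.mem_insert_of_mem hx))
      (fun x hx => hz x (Finset.mem_insert_of_mem hx))
    set b := s.max' hne with hb
    have hbs : b ∈ s := s.max'_mem hne
    have hba : b < a := has b hbs
    have hbI : b ∈ I := hs (by simp [hbs])
    have h0 : ∀ x ∈ insert a s, f x = 0 := fun x hx => by
      simpa using hz x hx 0 (hl x hx)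
    obtain ⟨c, ⟨hbc, hca⟩, hc⟩ := exists_deriv_eq_zero hba (hf.mono (hI.out hbI haI))
      ((h0 b (by simp [hbs])).trans (h0 a (by simp)).symm)
    have hcI : c ∈ I := hI.out hbI haI ⟨hbc.le, hca.le⟩
    have htb : ∀ y ∈ t, y ≤ b := fun y hy => by
      obtain ⟨x, hx, hyx⟩ := hts y hy
      exact hyx.trans (s.le_max' x hx)
    have hct : c ∉ t := fun h => absurd (htb c h) (not_le.2 hbc)
    have hat : a ∉ insert c t := by
      rw [Finset.mem_insert, not_or]
      exact ⟨hca.ne', fun h => absurd (htb a h) (not_le.2 hba)⟩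
    refine ⟨insert a (insert c t), fun y => if y = a then l a - 1 else if y = c then 1 else l' y,
      ?_, ?_, ?_, ?_⟩
    · intro y hy
      simp only [Finset.coe_insert, Set.mem_insert_iff] at hy
      rcases hy with rfl | rfl | hy
      exacts [haI, hcI, htI hy]
    · intro y hy j hj
      simp only [Finset.mem_insert] at hy
      by_cases hya : y = a
      · subst hya
        exact hza j (by simpa using hj)
      by_cases hyc : y = c
      · subst hyc
        have : j = 0 := by simpa [hya] using hj
        subst this
        simpa using hc
      · simp only [hya, hyc, if_false, false_or] at hy hj
        exact htz y hy j hj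
    · intro y hy
      refine ⟨a, by simp, ?_⟩
      simp only [Finset.mem_insert] at hy
      rcases hy with rfl | rfl | hy
      exacts [le_rfl, hca.le, (htb y hy).trans hba.le]
    · rw [Finset.sum_insert ha, Finset.sum_insert hat, Finset.sum_insert hct]
      have hsum' : ∑ y ∈ t, (if y = a then l a - 1 else if y = c then 1 else l' y)
          = ∑ y ∈ t, l' y := by
        refine Finset.sum_congr rfl fun y hy => ?_
        rw [if_neg, if_neg]
        · rintro rfl; exact hct hy
        · rintro rfl; exact hat (Finset.mem_insert_of_mem hy)
      rw [hsum', if_pos rfl, if_neg hca.ne, if_pos rfl]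
      omega

lemma HasZeros.deriv {f : ℝ → ℝ} {I : Set ℝ} (hI : I.OrdConnected) (hf : ContinuousOn f I)
    {K : ℕ} (h : HasZeros f I (K + 1)) : HasZeros (deriv f) I K := by
  obtain ⟨s, l, hs, hz, hK⟩ := h
  have hfil : ∑ x ∈ s with 1 ≤ l x, l x = ∑ x ∈ s, l x :=
    Finset.sum_filter_of_ne fun x _ hx => Nat.one_le_iff_ne_zero.2 hx
  obtain ⟨t, l', ht, htz, -, hsum⟩ := rolle_aux hI hf l (s.filter fun x => 1 ≤ l x)
    (fun x hx => hs (by simp at hx ⊢; exact hx.1)) (fun x hx => (Finset.mem_filter.1 hx).2)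
    (fun x hx => hz x (Finset.mem_filter.1 hx).1)
  exact ⟨t, l', ht, htz, by omega⟩

lemma HasZeros.iteratedDeriv {I : Set ℝ} (hI : I.OrdConnected) (hIo : IsOpen I) (k : ℕ) :
    ∀ {f : ℝ → ℝ}, ContDiffOn ℝ (⊤ : ℕ∞) f I → ∀ {K : ℕ}, HasZeros f I (K + k) →
      HasZeros (iteratedDeriv k f) I K := by
  induction k with
  | zero => intro f _ K h; simpa using h
  | succ k ih =>
    intro f hf K h
    rw [iteratedDeriv_succ']
    exact ih ((contDiffOn_infty_iff_deriv_of_isOpen hIo).1 hf).2 (h.deriv hI hf.continuousOn)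

lemma HasZeros.congr {f g : ℝ → ℝ} {I : Set ℝ} (hIo : IsOpen I) (hfg : Set.EqOn f g I) {K : ℕ}
    (h : HasZeros f I K) : HasZeros g I K := by
  obtain ⟨s, l, hs, hz, hK⟩ := h
  refine ⟨s, l, hs, fun x hx j hj => ?_, hK⟩
  rw [← hz x hx j hj]
  exact ((hfg.eventuallyEq_of_mem (hIo.mem_nhds (hs hx))).iteratedDeriv_eq j).symm

/-- By the Leibniz rule, multiplying by a smooth function does not lower the order of a zero. -/
lemma HasZeros.mul {f g : ℝ → ℝ} {I : Set ℝ} (hIo : IsOpen I) (hf : ContDiffOn ℝ (⊤ : ℕ∞) f I)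
    (hg : ContDiffOn ℝ (⊤ : ℕ∞) g I) {K : ℕ} (h : HasZeros f I K) :
    HasZeros (fun x => g x * f x) I K := by
  obtain ⟨s, l, hs, hz, hK⟩ := h
  refine ⟨s, l, hs, fun x hx j hj => ?_, hK⟩
  have hn := hIo.mem_nhds (hs hx)
  have hj' : ((j : ℕ∞) : WithTop ℕ∞) ≤ ((⊤ : ℕ∞) : WithTop ℕ∞) := by exact_mod_cast le_top
  have := iteratedDeriv_mul (n := j) ((hg.contDiffAt hn).of_le hj') ((hf.contDiffAt hn).of_le hj')
  rw [show (fun x => g x * f x) = g * f from rfl, this]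
  refine Finset.sum_eq_zero fun i hi => ?_
  rw [hz x hx (j - i) (by omega), mul_zero]

lemma contDiff_polynomial_eval (p : Polynomial ℝ) {N : WithTop ℕ∞} :
    ContDiff ℝ N (fun x => p.eval x) := by
  simpa using p.contDiff_aeval (𝕜 := ℝ) N

lemma iteratedDeriv_polynomial (p : Polynomial ℝ) (k : ℕ) :
    iteratedDeriv k (fun x => p.eval x) = fun x => (Polynomial.derivative^[k] p).eval x := by
  induction k with
  | zero => simp
  | succ k ih =>
    rw [iteratedDeriv_succ, ih, Function.iterate_succ_apply']
    funext x
    exact Polynomial.deriv _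

lemma polynomial_eq_zero_of_hasZeros {p : Polynomial ℝ} {I : Set ℝ} {K : ℕ}
    (h : HasZeros (fun x => p.eval x) I K) (hK : p.natDegree < K) : p = 0 := by
  by_contra hp
  obtain ⟨s, l, hs, hz, hsum⟩ := h
  have hle : ∀ x ∈ s, l x ≤ p.roots.count x := by
    intro x hx
    rw [Polynomial.count_roots]
    rcases Nat.eq_zero_or_pos (l x) with h0 | h0
    · omega
    have := (Polynomial.lt_rootMultiplicity_iff_isRoot_iterate_derivative (t := x)
      (n := l x - 1) hp).2 (fun m hm => by
        have := hz x hx m (by omega)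
        rwa [iteratedDeriv_polynomial] at this)
    omega
  have h1 : ∑ x ∈ s, p.roots.count x ≤ Multiset.card p.roots := by
    rw [← Multiset.toFinset_sum_count_eq]
    refine Finset.sum_le_sum_of_ne_zero fun x _ hx => ?_
    rwa [Multiset.mem_toFinset, ← Multiset.count_ne_zero]
  have h2 := p.card_roots'
  have h3 := Finset.sum_le_sum hle
  omega

/-- The `(i+1+k)`-th derivative of `x^i ln x` is a nonzero multiple of `x^(-k-1)`: each derivative
lowers the power in front of the logarithm by one, up to a monomial killed by the remaining ones. -/
lemma iteratedDeriv_pow_mul_log (i k : ℕ) : ∃ c : ℝ, c ≠ 0 ∧ ∀ x : ℝ, 0 < x →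
    iteratedDeriv (i + 1 + k) (fun x => x ^ i * Real.log x) x = c * (x ^ (k + 1))⁻¹ := by
  induction i with
  | zero =>
    refine ⟨(-1) ^ k * k.factorial, by positivity, fun x hx => ?_⟩
    rw [show 0 + 1 + k = k + 1 by omega, iteratedDeriv_succ']
    simp only [pow_zero, one_mul, Real.deriv_log']
    rw [iteratedDeriv_eq_iterate, iter_deriv_inv]
    rw [show (-1 - k : ℤ) = -((k + 1 : ℕ) : ℤ) by push_cast; ring, zpow_neg, zpow_natCast]
  | succ i ih =>
    obtain ⟨c, hc, h⟩ := ih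
    refine ⟨(i + 1) * c, by positivity, fun x hx => ?_⟩
    have hd : deriv (fun x : ℝ => x ^ (i + 1) * Real.log x) =ᶠ[nhds x]
        ((fun x => ((i : ℝ) + 1) * (x ^ i * Real.log x)) +
          fun x => (Polynomial.X ^ i : Polynomial ℝ).eval x) := by
      filter_upwards [lt_mem_nhds hx] with y hy
      have := (hasDerivAt_pow (i + 1) y).mul (Real.hasDerivAt_log hy.ne')
      rw [show (fun x : ℝ => x ^ (i + 1) * Real.log x) = (fun x => x ^ (i + 1)) * Real.log from rfl,
        this.deriv]
      simp only [Pi.add_apply, Polynomial.eval_pow, Polynomial.eval_X]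
      push_cast
      field_simp
      ring
    rw [show i + 1 + 1 + k = (i + 1 + k) + 1 by omega, iteratedDeriv_succ', hd.iteratedDeriv_eq,
      iteratedDeriv_add, iteratedDeriv_const_mul_field, h x hx, iteratedDeriv_polynomial,
      Polynomial.iterate_derivative_eq_zero]
    · simp; ring
    · simp; omega
    · have : x ≠ 0 := hx.ne'
      fun_prop (disch := assumption)
    · exact (contDiff_polynomial_eval _).contDiffAt

theorem zero_bound_case_four
    (n : ℕ) (hn : 2 ≤ n) (u v r : ℕ → ℝ) (M : ℝ → ℝ)
    (hM : ∀ h ∈ Set.Ioo (0 : ℝ) 1, M h =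
      ∑ i ∈ Finset.range (n + 1), u i * (1 - h) ^ (i + 1)
        + ∑ i ∈ Finset.Icc 1 n, v i * h ^ i
        + ∑ i ∈ Finset.Icc 1 ((n + 1) / 2), r i * h ^ i * Real.log h) :
    ZerosLE M (Set.Ioo 0 1) (n + 1 + (n + 1) / 2) := by
  intro s l hs hz
  by_contra! hlt
  set m := (n + 1) / 2 with hm
  set I : Set ℝ := Set.Ioo 0 1 with hI
  have hIo : IsOpen I := isOpen_Ioo
  have hIc : I.OrdConnected := Set.ordConnected_Ioo
  have hZ : HasZeros M I (m + (n + 2)) :=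
    ⟨s, l, hs, fun x hx => (hz x hx).2.1, by omega⟩
  let P : Polynomial ℝ := ∑ i ∈ Finset.range (n + 1), Polynomial.C (u i) * (1 - Polynomial.X) ^ (i + 1)
    + ∑ i ∈ Finset.Icc 1 n, Polynomial.C (v i) * Polynomial.X ^ i
  have hP : P.natDegree ≤ n + 1 := by
    refine Polynomial.natDegree_add_le_of_degree_le ?_ ?_
    · refine Polynomial.natDegree_sum_le_of_forall_le _ _ fun i hi => ?_
      have := Finset.mem_range.1 hi
      refine (Polynomial.natDegree_C_mul_le _ _).trans ?_
      refine (Polynomial.natDegree_pow_le_of_le (i + 1) (m := 1) ?_).trans (by omega)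
      exact (Polynomial.natDegree_sub_le _ _).trans (by simp)
    · refine Polynomial.natDegree_sum_le_of_forall_le _ _ fun i hi => ?_
      have := Finset.mem_Icc.1 hi
      exact (Polynomial.natDegree_C_mul_X_pow_le _ _).trans (by omega)
  have hMP : ∀ x ∈ I, M x = P.eval x + ∑ i ∈ Finset.Icc 1 m, r i * (x ^ i * Real.log x) := by
    intro x hx
    rw [hM x hx]
    simp [P, Polynomial.eval_finsetSum, mul_assoc]
  let F : ℝ → ℝ := (fun x => P.eval x) +
    fun x => ∑ i ∈ Finset.Icc 1 m, r i * (x ^ i * Real.log x)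
  have hlog : ∀ N : WithTop ℕ∞, ∀ i, ∀ x ∈ I,
      ContDiffAt ℝ N (fun x => r i * (x ^ i * Real.log x)) x := by
    intro N i x hx
    have : x ≠ 0 := hx.1.ne'
    fun_prop (disch := assumption)
  have hF : ContDiffOn ℝ (⊤ : ℕ∞) F I := fun x hx =>
    ((contDiff_polynomial_eval _).contDiffAt.add
      (ContDiffAt.sum fun i _ => hlog _ i x hx)).contDiffWithinAt
  have hMF : Set.EqOn M F I := hMP
  choose c hc0 hc using fun i => iteratedDeriv_pow_mul_log i (n + 1 - i)
  let R : Polynomial ℝ := ∑ i ∈ Finset.Icc 1 m, Polynomial.C (r i * c i) * Polynomial.X ^ (i - 1)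
  have hFR : ∀ x ∈ I, x ^ (n + 1) * iteratedDeriv (n + 2) F x = R.eval x := by
    intro x hx
    have hx0 : x ≠ 0 := hx.1.ne'
    rw [iteratedDeriv_add (contDiff_polynomial_eval _).contDiffAt
      (ContDiffAt.sum fun i _ => hlog _ i x hx), iteratedDeriv_polynomial,
      Polynomial.iterate_derivative_eq_zero (by omega),
      iteratedDeriv_fun_sum fun i _ => hlog _ i x hx]
    simp only [Polynomial.eval_zero, zero_add, R, Polynomial.eval_finsetSum, Finset.mul_sum]
    refine Finset.sum_congr rfl fun i hi => ?_
    have hi' := Finset.mem_Icc.1 hi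
    have h1 := hc i x hx.1
    rw [show i + 1 + (n + 1 - i) = n + 2 by omega] at h1
    rw [iteratedDeriv_const_mul_field, h1]
    have h2 : x ^ (n + 1) = x ^ (i - 1) * x ^ (n + 1 - i + 1) := by
      rw [← pow_add]; congr 1; omega
    simp only [Polynomial.eval_mul, Polynomial.eval_C, Polynomial.eval_pow, Polynomial.eval_X]
    rw [h2]
    field_simp
  have hFd : ContDiffOn ℝ (⊤ : ℕ∞) (iteratedDeriv (n + 2) F) I := by
    generalize n + 2 = k
    induction k with
    | zero => simpa using hF
    | succ k ih =>
      rw [iteratedDeriv_succ]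
      exact ((contDiffOn_infty_iff_deriv_of_isOpen hIo).1 ih).2
  have hR0 : R = 0 := by
    refine polynomial_eq_zero_of_hasZeros (I := I) (K := m) ?_ ?_
    · exact (((hZ.congr hIo hMF).iteratedDeriv hIc hIo (n + 2) hF).mul hIo hFd
        (g := fun x => x ^ (n + 1)) (by fun_prop)).congr hIo hFR
    · refine lt_of_le_of_lt (b := m - 1) ?_ (by omega)
      refine Polynomial.natDegree_sum_le_of_forall_le _ _ fun i hi => ?_
      have := Finset.mem_Icc.1 hi
      exact (Polynomial.natDegree_C_mul_X_pow_le _ _).trans (by omega)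
  have hr : ∀ i ∈ Finset.Icc 1 m, r i = 0 := by
    intro i hi
    have hi' := Finset.mem_Icc.1 hi
    have h1 : R.coeff (i - 1) = r i * c i := by
      simp only [R, Polynomial.finsetSum_coeff, Polynomial.coeff_C_mul, Polynomial.coeff_X_pow]
      rw [Finset.sum_eq_single i]
      · simp
      · intro j hj hji
        have := Finset.mem_Icc.1 hj
        rw [if_neg (by omega), mul_zero]
      · exact fun h => absurd hi h
    rw [hR0, Polynomial.coeff_zero] at h1
    exact (mul_eq_zero.1 h1.symm).resolve_right (hc0 i)
  have hMP' : Set.EqOn M (fun x => P.eval x) I := by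
    intro x hx
    rw [hMP x hx, Finset.sum_eq_zero fun i hi => by rw [hr i hi, zero_mul], add_zero]
  have hP0 : P = 0 := polynomial_eq_zero_of_hasZeros (hZ.congr hIo hMP') (by omega)
  have hne : s.Nonempty := by
    rw [Finset.nonempty_iff_ne_empty]
    rintro rfl
    simp at hlt
  obtain ⟨x, hx⟩ := hne
  refine (hz x hx).2.2 ?_
  rw [(hMP'.eventuallyEq_of_mem (hIo.mem_nhds (hs hx))).iteratedDeriv_eq, hP0,
    iteratedDeriv_polynomial]
  simp
end

section
/- (Zero bound on (0,∞) in the proof of Theorem 4.1.) Let n ≥ 3 be an integer, and let M : (0,∞) → ℝ be of the form M(h) = Q_0(h) + Q_1(h)√h + Q_2(h)√(h² + h) + Q_3(h)·arctan(√h) + Q_4(h)·ln(2√(h²+h) + 2h + 1), where Q_0, Q_1, Q_2, Q_3, Q_4 are real polynomials with deg Q_0 ≤ n, deg Q_1 ≤ n−1, deg Q_2 ≤ n−2, deg Q_3 ≤ n, deg Q_4 ≤ 2. Then M has at most 5n + 1 zeros on (0, ∞) counting multiplicity. -/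
open Polynomial

/-! ### Rolle's theorem with multiplicities -/

/-- `F 0` vanishes identically on `(0, ∞)`, or it has at most `N` zeros there, where a point counts
`l` times as soon as `F 0, …, F (l - 1)` vanish at it. The sequence `F` is meant to consist of a
function and its successive derivatives. -/
def ZeroBound (F : ℕ → ℝ → ℝ) (N : ℕ) : Prop :=
  (∀ x > 0, F 0 x = 0) ∨ ∀ (s : Finset ℝ) (l : ℝ → ℕ), (∀ x ∈ s, 0 < x) →
    (∀ x ∈ s, ∀ j < l x, F j x = 0) → ∑ x ∈ s, l x ≤ N

/-- Rolle's theorem with multiplicities: each zero of `F 0` loses one from its multiplicity when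
passing to `F 1`, and a new zero appears between any two consecutive ones. -/
theorem ZeroBound.of_deriv {F : ℕ → ℝ → ℝ} {N : ℕ}
    (hF : ∀ k, ∀ x > 0, HasDerivAt (F k) (F (k + 1) x) x)
    (h : ZeroBound (fun k => F (k + 1)) N) : ZeroBound F (N + 1) := by
  by_cases h0 : ∀ x > 0, F 0 x = 0
  · exact Or.inl h0
  right
  intro s l hs hl
  rcases h with h | h
  · -- `F 0` is a nonzero constant, so every multiplicity is zero.
    have hconst : ∀ x > 0, ∀ y > 0, F 0 x = F 0 y := by
      intro x hx y hy
      refine (convex_Ioi (0 : ℝ)).is_const_of_fderivWithin_eq_zero (𝕜 := ℝ) (f := F 0)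
        (fun z hz => (hF 0 z hz).differentiableAt.differentiableWithinAt) ?_ hx hy
      intro z hz
      rw [fderivWithin_of_isOpen isOpen_Ioi hz]
      have h1 := (hF 0 z hz)
      rw [show F (0 + 1) z = 0 from h z hz] at h1
      simpa using h1.hasFDerivAt.fderiv
    have : ∑ x ∈ s, l x = 0 := by
      refine Finset.sum_eq_zero fun x hx => ?_
      by_contra hne
      exact h0 fun y hy => (hconst y hy x (hs x hx)).trans (hl x hx 0 (Nat.pos_of_ne_zero hne))
    omega
  · set s' := s.filter (fun x => 1 ≤ l x) with hs'
    have hmem : ∀ x ∈ s', x ∈ s ∧ 1 ≤ l x := fun x hx => by simpa [hs'] using hx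
    have hrolle : ∀ x y : ℝ, ∃ c, x ∈ s' → y ∈ s' → x < y → (x < c ∧ c < y) ∧ F 1 c = 0 := by
      intro x y
      by_cases hxy : x ∈ s' ∧ y ∈ s' ∧ x < y
      · obtain ⟨hx, hy, hlt⟩ := hxy
        have hx0 := hs x (hmem x hx).1
        obtain ⟨c, hc, hc0⟩ := exists_hasDerivAt_eq_zero (f := F 0) (f' := F 1) hlt
          (fun z hz => (hF 0 z (hx0.trans_le hz.1)).continuousAt.continuousWithinAt)
          (by rw [hl x (hmem x hx).1 0 (hmem x hx).2, hl y (hmem y hy).1 0 (hmem y hy).2])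
          (fun z hz => hF 0 z (hx0.trans hz.1))
        exact ⟨c, fun _ _ _ => ⟨hc, hc0⟩⟩
      · exact ⟨0, fun h1 h2 h3 => (hxy ⟨h1, h2, h3⟩).elim⟩
    choose c hc using hrolle
    set t := ((s' ×ˢ s').filter (fun p => p.1 < p.2)).image (fun p => c p.1 p.2) with ht
    have htmem : ∀ z ∈ t, 0 < z ∧ F 1 z = 0 := by
      intro z hz
      simp only [ht, Finset.mem_image, Finset.mem_filter, Finset.mem_product] at hz
      obtain ⟨⟨x, y⟩, ⟨⟨hx, hy⟩, hlt⟩, rfl⟩ := hz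
      have := hc x y hx hy hlt
      exact ⟨(hs x (hmem x hx).1).trans this.1.1, this.2⟩
    have hcard : s'.card ≤ (t \ s').card + 1 := by
      refine Finset.card_le_sdiff_of_interleaved fun x hx y hy hlt _ => ⟨c x y, ?_, ?_⟩
      · simp only [ht, Finset.mem_image, Finset.mem_filter, Finset.mem_product]
        exact ⟨(x, y), ⟨⟨hx, hy⟩, hlt⟩, rfl⟩
      · exact (hc x y hx hy hlt).1
    have key := h (s' ∪ t \ s') (fun z => if z ∈ s' then l z - 1 else 1) (by
        intro z hz
        rcases Finset.mem_union.1 hz with hz | hz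
        · exact hs z (hmem z hz).1
        · exact (htmem z (Finset.mem_sdiff.1 hz).1).1) (by
        intro z hz j hj
        by_cases hzs : z ∈ s'
        · simp only [hzs, if_true] at hj
          exact hl z (hmem z hzs).1 (j + 1) (by omega)
        · simp only [hzs, if_false] at hj
          obtain rfl : j = 0 := by omega
          rcases Finset.mem_union.1 hz with hz | hz
          · exact (hzs hz).elim
          · exact (htmem z (Finset.mem_sdiff.1 hz).1).2)
    rw [Finset.sum_union Finset.disjoint_sdiff] at key
    have e1 : ∑ x ∈ s', (if x ∈ s' then l x - 1 else 1) + s'.card = ∑ x ∈ s', l x := by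
      rw [Finset.card_eq_sum_ones, ← Finset.sum_add_distrib]
      refine Finset.sum_congr rfl fun x hx => ?_
      have := (hmem x hx).2
      simp only [hx, if_true]
      omega
    have e2 : ∑ x ∈ t \ s', (if x ∈ s' then l x - 1 else 1) = (t \ s').card := by
      rw [Finset.card_eq_sum_ones]
      exact Finset.sum_congr rfl fun x hx => by simp [(Finset.mem_sdiff.1 hx).2]
    have e3 : ∑ x ∈ s', l x = ∑ x ∈ s, l x := by
      refine Finset.sum_filter_of_ne fun x _ hx => ?_
      omega
    omega

theorem ZeroBound.of_iterate {F : ℕ → ℝ → ℝ} {N : ℕ}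
    (hF : ∀ k, ∀ x > 0, HasDerivAt (F k) (F (k + 1) x) x) (m : ℕ)
    (h : ZeroBound (fun k => F (k + m)) N) : ZeroBound F (N + m) := by
  induction m generalizing N with
  | zero => exact h
  | succ m ih =>
    have := ih (N := N + 1) (ZeroBound.of_deriv (F := fun k => F (k + m)) (N := N)
      (fun k x hx => by simpa [add_right_comm] using hF (k + m) x hx)
      (by simpa [add_right_comm, add_assoc, add_comm 1] using h))
    rwa [show N + (m + 1) = N + 1 + m by omega]

theorem iteratedDeriv_eq_seq {F : ℕ → ℝ → ℝ}
    (hF : ∀ k, ∀ x > 0, HasDerivAt (F k) (F (k + 1) x) x) {f : ℝ → ℝ} {m : ℕ}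
    (hf : ∀ x > 0, f x = F m x) (j : ℕ) : ∀ x > 0, iteratedDeriv j f x = F (j + m) x := by
  induction j with
  | zero => simpa using hf
  | succ j ih =>
    intro x hx
    rw [iteratedDeriv_succ]
    have : iteratedDeriv j f =ᶠ[nhds x] F (j + m) := by
      filter_upwards [lt_mem_nhds hx] with y hy using ih y hy
    rw [this.deriv_eq, (hF (j + m) x hx).deriv, add_right_comm]

/-! ### Roots of polynomials and order of vanishing -/

theorem sum_le_natDegree {R : ℝ[X]} (s : Finset ℝ) (l : ℝ → ℕ)
    (h : ∀ x ∈ s, l x ≤ R.rootMultiplicity x) : ∑ x ∈ s, l x ≤ R.natDegree := by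
  calc ∑ x ∈ s, l x ≤ ∑ x ∈ s, R.roots.count x :=
        Finset.sum_le_sum fun x hx => by rw [count_roots]; exact h x hx
    _ ≤ ∑ x ∈ s ∪ R.roots.toFinset, R.roots.count x :=
        Finset.sum_le_sum_of_subset Finset.subset_union_left
    _ = R.roots.card := Multiset.sum_count_eq_card (by simp +contextual)
    _ ≤ R.natDegree := R.card_roots'

theorem iteratedDeriv_polynomial_s13 (R : ℝ[X]) (j : ℕ) :
    iteratedDeriv j (fun x => R.eval x) = fun x => (derivative^[j] R).eval x := by
  induction j with
  | zero => simp
  | succ j ih =>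
    rw [iteratedDeriv_succ, ih, Function.iterate_succ_apply']
    ext x
    simp

/-- If `R = f * g` near `x` with `f`, `g` smooth and `f` vanishing to order `l`, then `x` is a root
of `R` of multiplicity at least `l`. -/
theorem le_rootMultiplicity_of_eq_mul {R : ℝ[X]} (hR : R ≠ 0) {f g : ℝ → ℝ} {x : ℝ} {l : ℕ}
    (hf : ∀ k : ℕ, ContDiffAt ℝ k f x) (hg : ∀ k : ℕ, ContDiffAt ℝ k g x)
    (hfg : (fun y => R.eval y) =ᶠ[nhds x] f * g)
    (h0 : ∀ j < l, iteratedDeriv j f x = 0) : l ≤ R.rootMultiplicity x := by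
  rcases l with _ | l
  · exact Nat.zero_le _
  refine (lt_rootMultiplicity_iff_isRoot_iterate_derivative hR).2 fun j hj => ?_
  rw [IsRoot, ← congrFun (iteratedDeriv_polynomial_s13 R j) x, hfg.iteratedDeriv_eq j,
    iteratedDeriv_mul (hf j) (hg j)]
  refine Finset.sum_eq_zero fun i hi => ?_
  rw [h0 i (by have := Finset.mem_range.1 hi; omega)]
  ring

/-- `1 + X` has odd degree, so it is not a quotient of squares. -/
theorem eq_zero_of_sq_eq {A B : ℝ[X]} (h : A ^ 2 - (1 + X) * B ^ 2 = 0) : A = 0 ∧ B = 0 := by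
  have hX : (1 + X : ℝ[X]).natDegree = 1 := by
    rw [add_comm]; exact natDegree_X_add_C (1 : ℝ)
  have hX0 : (1 + X : ℝ[X]) ≠ 0 := by
    intro h; rw [h] at hX; simp at hX
  have h' : A ^ 2 = (1 + X) * B ^ 2 := sub_eq_zero.1 h
  by_cases hB : B = 0
  · subst hB
    exact ⟨by simpa using h', rfl⟩
  · have := congrArg natDegree h'
    rw [natDegree_pow, natDegree_mul hX0 (pow_ne_zero 2 hB), natDegree_pow, hX] at this
    omega

/-! ### Numerators of the derivatives and their degrees -/

/-- Numerator of the coefficient of `√h` in the `k`-th derivative; `P` is the coefficient of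
`arctan √h`. -/
noncomputable def numA (A P : ℝ[X]) : ℕ → ℝ[X]
  | 0 => A
  | k + 1 => derivative (numA A P k) * (X ^ 2 + X)
      + numA A P k * (C (1 / 2) * (1 + X) - C (k : ℝ) * (2 * X + 1))
      + C (1 / 2) * (derivative^[k] P * (X ^ 2 + X) ^ k)

/-- Numerator of the coefficient of `√(h ^ 2 + h)` in the `k`-th derivative; `P` is the coefficient
of the logarithm. -/
noncomputable def numB (B P : ℝ[X]) : ℕ → ℝ[X]
  | 0 => B
  | k + 1 => derivative (numB B P k) * (X ^ 2 + X)
      + numB B P k * (C (1 / 2 - k : ℝ) * (2 * X + 1))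
      + derivative^[k] P * (X ^ 2 + X) ^ k

theorem natDegree_deriv_mul_q_le {A : ℝ[X]} {d : ℕ} (h : A.natDegree ≤ d) :
    (derivative A * (X ^ 2 + X)).natDegree ≤ d + 1 := by
  rcases Nat.eq_zero_or_pos A.natDegree with h0 | h0
  · rw [derivative_of_natDegree_zero h0]; simp
  · have h1 := natDegree_derivative_le A
    have h2 : (X ^ 2 + X : ℝ[X]).natDegree ≤ 2 := by compute_degree
    have := natDegree_mul_le (p := derivative A) (q := X ^ 2 + X)
    omega

theorem natDegree_iterate_mul_q_le {P : ℝ[X]} {d k : ℕ} (h : P.natDegree ≤ d) :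
    (derivative^[k] P * (X ^ 2 + X) ^ k).natDegree ≤ d + k := by
  rcases lt_or_ge P.natDegree k with h0 | h0
  · rw [iterate_derivative_eq_zero h0]; simp
  · have h1 := natDegree_iterate_derivative P k
    have h2 : ((X ^ 2 + X : ℝ[X]) ^ k).natDegree ≤ k * 2 :=
      natDegree_pow_le_of_le k (by compute_degree)
    have := natDegree_mul_le (p := derivative^[k] P) (q := (X ^ 2 + X) ^ k)
    omega

theorem natDegree_mul_linear_le {A L : ℝ[X]} {d : ℕ} (h : A.natDegree ≤ d)
    (hL : L.natDegree ≤ 1) : (A * L).natDegree ≤ d + 1 :=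
  natDegree_mul_le_of_le h hL

theorem natDegree_numA_le {A P : ℝ[X]} {n : ℕ} (hA : A.natDegree ≤ n) (hP : P.natDegree ≤ n + 1)
    (k : ℕ) : (numA A P k).natDegree ≤ n + k := by
  induction k with
  | zero => exact hA
  | succ k ih =>
    rw [numA]
    refine natDegree_add_le_of_degree_le (natDegree_add_le_of_degree_le
      (natDegree_deriv_mul_q_le ih) (natDegree_mul_linear_le ih (by compute_degree))) ?_
    refine (natDegree_C_mul_le _ _).trans ((natDegree_iterate_mul_q_le hP).trans ?_)
    omega

theorem natDegree_numB_le {B P : ℝ[X]} {n : ℕ} (hB : B.natDegree ≤ n) (hP : P.natDegree ≤ n + 1)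
    (k : ℕ) : (numB B P k).natDegree ≤ n + k := by
  induction k with
  | zero => exact hB
  | succ k ih =>
    rw [numB]
    refine natDegree_add_le_of_degree_le (natDegree_add_le_of_degree_le
      (natDegree_deriv_mul_q_le ih) (natDegree_mul_linear_le ih (by compute_degree))) ?_
    refine (natDegree_iterate_mul_q_le hP).trans ?_
    omega

/-! ### Closed form of the derivatives -/

/-- Closed form of the `k`-th derivative of `M` on `(0, ∞)`. -/
noncomputable def derivSeq (Q0 Q1 Q2 Q3 Q4 : ℝ[X]) (k : ℕ) (h : ℝ) : ℝ :=
  (derivative^[k] Q0).eval h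
    + ((numA Q1 Q3 k).eval h * √h + (numB Q2 Q4 k).eval h * √(h ^ 2 + h)) / (h ^ 2 + h) ^ k
    + (derivative^[k] Q3).eval h * Real.arctan √h
    + (derivative^[k] Q4).eval h * Real.log (2 * √(h ^ 2 + h) + 2 * h + 1)

theorem hasDerivAt_sqrt_self {x : ℝ} (hx : 0 < x) : HasDerivAt (fun y => √y) (√x / (2 * x)) x := by
  convert Real.hasDerivAt_sqrt hx.ne' using 1
  have h1 := Real.sqrt_pos.2 hx
  have h2 := Real.mul_self_sqrt hx.le
  rw [div_eq_div_iff (by positivity) (by positivity)]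
  linear_combination 2 * h2

theorem hasDerivAt_q (x : ℝ) : HasDerivAt (fun y : ℝ => y ^ 2 + y) (2 * x + 1) x := by
  refine ((hasDerivAt_pow 2 x).fun_add (hasDerivAt_id' x)).congr_deriv ?_
  simp

theorem hasDerivAt_sqrt_q {x : ℝ} (hx : 0 < x) :
    HasDerivAt (fun y : ℝ => √(y ^ 2 + y)) ((2 * x + 1) * √(x ^ 2 + x) / (2 * (x ^ 2 + x))) x := by
  have hq : 0 < x ^ 2 + x := by positivity
  refine (HasDerivAt.comp (h₂ := fun y => √y) (h := fun y : ℝ => y ^ 2 + y) x (hasDerivAt_sqrt_self hq)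
    (hasDerivAt_q x)).congr_deriv ?_
  ring

theorem hasDerivAt_arctan_sqrt {x : ℝ} (hx : 0 < x) :
    HasDerivAt (fun y : ℝ => Real.arctan √y) (√x / (2 * (x ^ 2 + x))) x := by
  refine ((Real.hasDerivAt_arctan √x).comp x (hasDerivAt_sqrt_self hx)).congr_deriv ?_
  rw [Real.sq_sqrt hx.le]
  field_simp
  ring

theorem hasDerivAt_log_term {x : ℝ} (hx : 0 < x) :
    HasDerivAt (fun y : ℝ => Real.log (2 * √(y ^ 2 + y) + 2 * y + 1))
      (√(x ^ 2 + x) / (x ^ 2 + x)) x := by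
  have hq : 0 < x ^ 2 + x := by positivity
  have hs := Real.sqrt_pos.2 hq
  have hsq := Real.mul_self_sqrt hq.le
  have h1 : HasDerivAt (fun y : ℝ => 2 * √(y ^ 2 + y) + 2 * y + 1)
      (2 * ((2 * x + 1) * √(x ^ 2 + x) / (2 * (x ^ 2 + x))) + 2 * 1) x :=
    (((hasDerivAt_sqrt_q hx).const_mul 2).add ((hasDerivAt_id x).const_mul 2)).add_const 1
  have hpos : 0 < 2 * √(x ^ 2 + x) + 2 * x + 1 := by positivity
  refine (h1.log hpos.ne').congr_deriv ?_
  clear h1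
  rw [div_eq_div_iff hpos.ne' hq.ne']
  generalize √(x ^ 2 + x) = r at *
  field_simp
  linear_combination (-2) * hsq

theorem hasDerivAt_derivSeq (Q0 Q1 Q2 Q3 Q4 : ℝ[X]) (k : ℕ) (x : ℝ) (hx : 0 < x) :
    HasDerivAt (derivSeq Q0 Q1 Q2 Q3 Q4 k) (derivSeq Q0 Q1 Q2 Q3 Q4 (k + 1) x) x := by
  have hq : 0 < x ^ 2 + x := by positivity
  -- The power `q ^ (-k)` is differentiated as `(q ^ k)⁻¹`, with no truncated exponent `k - 1`.
  have hpow : HasDerivAt (fun y : ℝ => ((y ^ 2 + y) ^ k)⁻¹)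
      (-(k * (2 * x + 1)) / (x ^ 2 + x) ^ (k + 1)) x := by
    refine (((hasDerivAt_q x).fun_pow k).fun_inv (pow_pos hq k).ne').congr_deriv ?_
    rcases k with _ | k
    · simp
    · simp only [Nat.add_sub_cancel]
      field_simp
      ring
  have e := ((((derivative^[k] Q0).hasDerivAt x).add
    (((((numA Q1 Q3 k).hasDerivAt x).mul (hasDerivAt_sqrt_self hx)).add
      (((numB Q2 Q4 k).hasDerivAt x).mul (hasDerivAt_sqrt_q hx))).mul hpow)).add
    (((derivative^[k] Q3).hasDerivAt x).mul (hasDerivAt_arctan_sqrt hx))).add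
    (((derivative^[k] Q4).hasDerivAt x).mul (hasDerivAt_log_term hx))
  have hfun : ∀ y, derivSeq Q0 Q1 Q2 Q3 Q4 k y = _ := fun y => by
    rw [derivSeq, div_eq_mul_inv]
  rw [funext hfun]
  refine e.congr_deriv ?_
  simp only [derivSeq, numA, numB, Function.iterate_succ_apply', eval_add, eval_mul, eval_sub,
    eval_pow, eval_X, eval_C, eval_one, eval_ofNat, Pi.add_apply, Pi.mul_apply]
  generalize √(x ^ 2 + x) = r
  generalize √x = t
  generalize Real.arctan t = a
  generalize Real.log _ = b
  field_simp
  ring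

/-! ### Zeros of the derivative of order `n + 1` -/

theorem natDegree_conj_le {A B : ℝ[X]} {n : ℕ} (hn : 1 ≤ n) (hA : A.natDegree ≤ 2 * n)
    (hB : B.natDegree ≤ 2 * n - 1) : (A ^ 2 - (1 + X) * B ^ 2).natDegree ≤ 4 * n := by
  refine (natDegree_sub_le_of_le (natDegree_pow_le_of_le 2 hA) (natDegree_mul_le_of_le
    (show (1 + X : ℝ[X]).natDegree ≤ 1 by compute_degree) (natDegree_pow_le_of_le 2 hB))).trans ?_
  omega

theorem zeroBound_top {n : ℕ} (hn : 3 ≤ n) {Q0 Q1 Q2 Q3 Q4 : ℝ[X]}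
    (hQ0 : Q0.natDegree ≤ n) (hQ1 : Q1.natDegree ≤ n - 1)
    (hQ2 : Q2.natDegree ≤ n - 2) (hQ3 : Q3.natDegree ≤ n)
    (hQ4 : Q4.natDegree ≤ 2) :
    ZeroBound (fun k => derivSeq Q0 Q1 Q2 Q3 Q4 (k + (n + 1))) (4 * n) := by
  have hA := natDegree_numA_le hQ1 (show Q3.natDegree ≤ n - 1 + 1 by omega) (n + 1)
  have hB := natDegree_numB_le hQ2 (show Q4.natDegree ≤ n - 2 + 1 by omega) (n + 1)
  have hsplit : ∀ y > 0, derivSeq Q0 Q1 Q2 Q3 Q4 (n + 1) y =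
      √y / (y ^ 2 + y) ^ (n + 1) *
        ((numA Q1 Q3 (n + 1)).eval y + (numB Q2 Q4 (n + 1)).eval y * √(1 + y)) := by
    intro y hy
    rw [derivSeq, iterate_derivative_eq_zero (show Q0.natDegree < n + 1 by omega),
      iterate_derivative_eq_zero (show Q3.natDegree < n + 1 by omega),
      iterate_derivative_eq_zero (show Q4.natDegree < n + 1 by omega),
      show y ^ 2 + y = y * (1 + y) by ring, Real.sqrt_mul hy.le]
    simp only [eval_zero]
    ring
  generalize numA Q1 Q3 (n + 1) = A at hA hsplit
  generalize numB Q2 Q4 (n + 1) = B at hB hsplit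
  by_cases hR : A ^ 2 - (1 + X) * B ^ 2 = 0
  · left
    obtain ⟨rfl, rfl⟩ := eq_zero_of_sq_eq hR
    intro x hx
    simp only [zero_add]
    rw [hsplit x hx]
    simp
  right
  intro s l hs hl
  refine (sum_le_natDegree (R := A ^ 2 - (1 + X) * B ^ 2) s l fun x hx => ?_).trans
    (natDegree_conj_le (by omega) (by omega) (by omega))
  have hx0 := hs x hx
  have hA' : ∀ k : ℕ, ContDiffAt ℝ k (fun y => A.eval y) x := fun k => by
    simpa using (A.contDiff_aeval (𝕜 := ℝ) (R := ℝ) k).contDiffAt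
  have hB' : ∀ k : ℕ, ContDiffAt ℝ k (fun y => B.eval y) x := fun k => by
    simpa using (B.contDiff_aeval (𝕜 := ℝ) (R := ℝ) k).contDiffAt
  have hs1 : ∀ k : ℕ, ContDiffAt ℝ k (fun y : ℝ => √(1 + y)) x := fun k =>
    (contDiffAt_const.add contDiffAt_id).sqrt (by simp only [id]; positivity)
  have hs2 : ∀ k : ℕ, ContDiffAt ℝ k (fun y : ℝ => √y) x := fun k =>
    contDiffAt_id.sqrt hx0.ne'
  have hq : ∀ k : ℕ, ContDiffAt ℝ k (fun y : ℝ => (y ^ 2 + y) ^ (n + 1)) x := fun k =>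
    ((contDiffAt_id.pow 2).add contDiffAt_id).pow (n + 1)
  refine le_rootMultiplicity_of_eq_mul hR
    (f := fun y => √y / (y ^ 2 + y) ^ (n + 1) * (A.eval y + B.eval y * √(1 + y)))
    (g := fun y => (y ^ 2 + y) ^ (n + 1) / √y * (A.eval y - B.eval y * √(1 + y)))
    (fun k => ((hs2 k).div (hq k) (by positivity)).mul ((hA' k).add ((hB' k).mul (hs1 k))))
    (fun k => ((hq k).div (hs2 k) (by positivity)).mul ((hA' k).sub ((hB' k).mul (hs1 k)))) ?_ ?_
  · filter_upwards [lt_mem_nhds hx0] with y hy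
    have h1 : 0 < √y := Real.sqrt_pos.2 hy
    have h2 : 0 < (y ^ 2 + y) ^ (n + 1) := by positivity
    have h3 : √(1 + y) ^ 2 = 1 + y := Real.sq_sqrt (by positivity)
    have h4 : √y / (y ^ 2 + y) ^ (n + 1) * ((y ^ 2 + y) ^ (n + 1) / √y) = 1 := by
      field_simp
    simp only [Pi.mul_apply, eval_sub, eval_mul, eval_pow, eval_add, eval_one, eval_X]
    linear_combination (-(B.eval y) ^ 2) * (- h3) -
      (A.eval y ^ 2 - B.eval y ^ 2 * √(1 + y) ^ 2) * h4
  · intro j hj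
    rw [iteratedDeriv_eq_seq (F := derivSeq Q0 Q1 Q2 Q3 Q4) (m := n + 1)
      (hasDerivAt_derivSeq Q0 Q1 Q2 Q3 Q4) (fun y hy => (hsplit y hy).symm) j x hx0]
    exact hl x hx j hj

/-! ### The bound for `M` -/

theorem zero_bound_on_pos_axis
    (n : ℕ) (hn : 3 ≤ n) (Q0 Q1 Q2 Q3 Q4 : Polynomial ℝ)
    (hQ0 : Q0.degree ≤ (n : ℕ)) (hQ1 : Q1.degree ≤ (n - 1 : ℕ))
    (hQ2 : Q2.degree ≤ (n - 2 : ℕ)) (hQ3 : Q3.degree ≤ (n : ℕ))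
    (hQ4 : Q4.degree ≤ (2 : ℕ))
    (M : ℝ → ℝ)
    (hM : ∀ h ∈ Set.Ioi (0 : ℝ), M h =
      Q0.eval h + Q1.eval h * Real.sqrt h + Q2.eval h * Real.sqrt (h ^ 2 + h)
        + Q3.eval h * Real.arctan (Real.sqrt h)
        + Q4.eval h * Real.log (2 * Real.sqrt (h ^ 2 + h) + 2 * h + 1)) :
    ZerosLE M (Set.Ioi 0) (5 * n + 1) := by
  have hF := hasDerivAt_derivSeq Q0 Q1 Q2 Q3 Q4
  have hit := iteratedDeriv_eq_seq hF (f := M) (m := 0)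
    (fun x hx => by rw [hM x hx]; simp [derivSeq, numA, numB]; ring)
  intro s l hs hl
  have hpos : ∀ x ∈ s, 0 < x := fun x hx => hs hx
  rcases ZeroBound.of_iterate hF (n + 1) (zeroBound_top hn (natDegree_le_of_degree_le hQ0)
    (natDegree_le_of_degree_le hQ1) (natDegree_le_of_degree_le hQ2)
    (natDegree_le_of_degree_le hQ3) (natDegree_le_of_degree_le hQ4)) with h | h
  · -- If `M` vanishes identically on `(0, ∞)`, it has no zero of finite multiplicity.
    have : s = ∅ := by
      refine Finset.eq_empty_of_forall_notMem fun x hx => (hl x hx).2.2 ?_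
      have hM0 : Set.EqOn M (fun _ => 0) (Set.Ioi 0) := fun y hy => by
        have := hit 0 y hy
        rw [iteratedDeriv_zero] at this
        rw [this]
        exact h y hy
      rw [hM0.iteratedDeriv_of_isOpen isOpen_Ioi (l x) (hpos x hx)]
      simp
    simp [this]
  · have := h s l hpos fun x hx j hj => by
      have h1 := (hl x hx).2.1 j hj
      rw [hit j x (hpos x hx)] at h1
      exact h1
    omega
end

section
/- For every integer n ≥ 0 there exists a real polynomial P of degree at most n such that for all h ∈ (0,1), the (n+1)-th derivative of the function h ↦ arcsin(√h) equals P(h)/[h(1−h)]^{n+1/2}. -/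
/-!
With `w = h (1 - h)`, the first derivative of `arcsin √h` is `(1/2) / √w`. Differentiating
`P / (w ^ n * √w)` gives `Q / (w ^ (n + 1) * √w)` with
`Q = P' * (X - X ^ 2) - (n + 1/2) * P * (1 - 2 * X)`, which has degree at most `n + 1` whenever
`P` has degree at most `n`. Induction on `n` then yields the result.
-/

open Polynomial in
/-- The numerator obtained by differentiating `P / ((h * (1 - h)) ^ n * √(h * (1 - h)))` over the
denominator with exponent `n + 1`. -/
noncomputable def nextNumerator (n : ℕ) (P : ℝ[X]) : ℝ[X] :=
  derivative P * (X - X ^ 2) - C ((n : ℝ) + 1 / 2) * P * (1 - 2 * X)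

open Polynomial in
lemma natDegree_nextNumerator_le {n : ℕ} {P : ℝ[X]} (hP : P.natDegree ≤ n) :
    (nextNumerator n P).natDegree ≤ n + 1 := by
  unfold nextNumerator
  refine (natDegree_sub_le _ _).trans (max_le ?_ ?_)
  · -- A constant `P` is separate: `natDegree P - 1` truncates to `0` there.
    rcases Nat.eq_zero_or_pos P.natDegree with h0 | hpos
    · simp [derivative_of_natDegree_zero h0]
    · have h1 := natDegree_derivative_le P
      have h2 : (X - X ^ 2 : ℝ[X]).natDegree ≤ 2 := by compute_degree
      have h3 := natDegree_mul_le (p := derivative P) (q := (X - X ^ 2 : ℝ[X]))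
      omega
  · have h1 : (C ((n : ℝ) + 1 / 2) * P).natDegree ≤ P.natDegree := natDegree_C_mul_le _ _
    have h2 : (1 - 2 * X : ℝ[X]).natDegree ≤ 1 := by compute_degree
    have h3 := natDegree_mul_le (p := C ((n : ℝ) + 1 / 2) * P) (q := (1 - 2 * X : ℝ[X]))
    omega

lemma hasDerivAt_arcsin_sqrt {h : ℝ} (hh : h ∈ Set.Ioo (0 : ℝ) 1) :
    HasDerivAt (fun x : ℝ => Real.arcsin (Real.sqrt x))
      ((1 / 2) / Real.sqrt (h * (1 - h))) h := by
  obtain ⟨h0, h1⟩ := hh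
  have hs : 0 < Real.sqrt h := Real.sqrt_pos.2 h0
  have hs1 : Real.sqrt h < 1 := by
    rw [Real.sqrt_lt' one_pos]; simpa using h1
  have ht : 0 < Real.sqrt (1 - h) := Real.sqrt_pos.2 (by linarith)
  have key := (Real.hasDerivAt_arcsin (x := Real.sqrt h) (by linarith) hs1.ne).comp h
    (Real.hasDerivAt_sqrt h0.ne')
  refine key.congr_deriv ?_
  rw [Real.sq_sqrt h0.le, Real.sqrt_mul h0.le]
  field_simp

lemma hasDerivAt_div_pow_mul_sqrt (n : ℕ) (P : Polynomial ℝ) {h : ℝ}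
    (hh : h ∈ Set.Ioo (0 : ℝ) 1) :
    HasDerivAt (fun x : ℝ => P.eval x / ((x * (1 - x)) ^ n * Real.sqrt (x * (1 - x))))
      ((nextNumerator n P).eval h / ((h * (1 - h)) ^ (n + 1) * Real.sqrt (h * (1 - h)))) h := by
  obtain ⟨h0, h1⟩ := hh
  have hw : 0 < h * (1 - h) := mul_pos h0 (by linarith)
  have dw : HasDerivAt (fun x : ℝ => x * (1 - x)) (1 - 2 * h) h := by
    refine ((hasDerivAt_id' h).mul ((hasDerivAt_id' h).const_sub 1)).congr_deriv ?_
    ring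
  have key := (P.hasDerivAt h).div ((dw.pow n).mul (dw.sqrt hw.ne'))
    (mul_pos (pow_pos hw n) (Real.sqrt_pos.2 hw)).ne'
  refine key.congr_deriv ?_
  have hQ : (nextNumerator n P).eval h = P.derivative.eval h * (h * (1 - h))
      - ((n : ℝ) + 1 / 2) * P.eval h * (1 - 2 * h) := by
    simp only [nextNumerator, Polynomial.eval_sub, Polynomial.eval_mul, Polynomial.eval_pow,
      Polynomial.eval_X, Polynomial.eval_C, Polynomial.eval_one, Polynomial.eval_ofNat]
    ring
  rw [hQ]
  simp only [Pi.mul_apply, Pi.pow_apply]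
  generalize P.eval h = p
  generalize P.derivative.eval h = p'
  generalize 1 - 2 * h = d
  generalize h * (1 - h) = w at hw
  have hs : 0 < Real.sqrt w := Real.sqrt_pos.2 hw
  have hsq : w = Real.sqrt w ^ 2 := (Real.sq_sqrt hw.le).symm
  generalize Real.sqrt w = s at hs hsq
  subst hsq
  -- `n = 0` is separate because the power rule produces the truncated exponent `n - 1`.
  rcases n with _ | m
  · simp
    field_simp
  · simp only [Nat.add_sub_cancel]
    push_cast
    field_simp
    ring

theorem iteratedDeriv_arcsin_sqrt (n : ℕ) :
    ∃ P : Polynomial ℝ, P.degree ≤ (n : ℕ) ∧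
      ∀ h ∈ Set.Ioo (0 : ℝ) 1,
        iteratedDeriv (n + 1) (fun x : ℝ => Real.arcsin (Real.sqrt x)) h
          = P.eval h / ((h * (1 - h)) ^ n * Real.sqrt (h * (1 - h))) := by
  induction n with
  | zero =>
    refine ⟨Polynomial.C (1 / 2), Polynomial.degree_C_le, fun h hh => ?_⟩
    rw [zero_add, iteratedDeriv_one, (hasDerivAt_arcsin_sqrt hh).deriv]
    simp
  | succ n ih =>
    obtain ⟨P, hdeg, hP⟩ := ih
    refine ⟨nextNumerator n P, Polynomial.natDegree_le_iff_degree_le.1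
      (natDegree_nextNumerator_le (Polynomial.natDegree_le_iff_degree_le.2 hdeg)),
      fun h hh => ?_⟩
    rw [iteratedDeriv_succ]
    -- The formula holds on a neighbourhood of `h`, so it may be differentiated.
    have hev := Filter.eventuallyEq_of_mem (isOpen_Ioo.mem_nhds hh) hP
    rw [hev.deriv_eq, (hasDerivAt_div_pow_mul_sqrt n P hh).deriv]
end
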